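/- arXiv:1612.07607 — 2 statements merged into one kernel-verified Lean document; each statement's English description precedes it below -/
import Mathlib

section
/- Let ρ be a bipartite state on ℂ^{dA}⊗ℂ^{dB}. Suppose there is an orthonormal basis {α_a}_{a=1}^{dA} of ℂ^{dA}, unit vectors β_1,…,β_{dA} in ℂ^{dB} that are linearly independent, and p_a > 0 such that Tr_A[ρ(|α_a⟩⟨α_a|⊗I_B)] = p_a|β_a⟩⟨β_a| for every a. If ρ is unsteerable from Alice's side for non-degenerate projective measurements, then ρ = Σ_{a=1}^{dA} p_a |α_a⊗β_a⟩⟨α_a⊗β_a|; in particular ρ is separable. Hence ρ is either separable or steerable. -/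
open scoped BigOperators Kronecker Classical ComplexOrder

namespace EPR

noncomputable section

/-- Complex inner product `⟨u, v⟩ = ∑ conj (u a) * v a` (conjugate-linear in the first slot). -/
def cinner {ι : Type*} [Fintype ι] (u v : ι → ℂ) : ℂ :=
  ∑ a, (starRingEnd ℂ) (u a) * v a

/-- `u` is a unit vector. -/
def IsUnitVec {ι : Type*} [Fintype ι] (u : ι → ℂ) : Prop := cinner u u = 1

/-- Rank-one projection `|u⟩⟨u|`, with entries `u k * conj (u l)`. -/
def proj {ι : Type*} [Fintype ι] (u : ι → ℂ) : Matrix ι ι ℂ :=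
  Matrix.of fun k l => u k * (starRingEnd ℂ) (u l)

/-- Rank-one operator `|u⟩⟨v|`, with entries `u k * conj (v l)`. -/
def outer {ι : Type*} [Fintype ι] (u v : ι → ℂ) : Matrix ι ι ℂ :=
  Matrix.of fun k l => u k * (starRingEnd ℂ) (v l)

/-- A state: positive semidefinite matrix of trace 1. -/
def IsState {ι : Type*} [Fintype ι] (ρ : Matrix ι ι ℂ) : Prop :=
  ρ.PosSemidef ∧ ρ.trace = 1

/-- An effect: `0 ≤ E ≤ I` in the Loewner order. -/
def IsEffect {d : ℕ} (E : Matrix (Fin d) (Fin d) ℂ) : Prop :=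
  E.PosSemidef ∧ (1 - E).PosSemidef

/-- Conditional state `Tr_A[ρ (E ⊗ I_B)]` of a bipartite state for an effect `E` on A:
entries `(E')_{b b'} = ∑_{a,a'} E_{a' a} ρ_{(a,b),(a',b')}`. -/
def condStateE {dA dB : ℕ} (ρ : Matrix (Fin dA × Fin dB) (Fin dA × Fin dB) ℂ)
    (E : Matrix (Fin dA) (Fin dA) ℂ) : Matrix (Fin dB) (Fin dB) ℂ :=
  Matrix.of fun b b' => ∑ a, ∑ a', E a' a * ρ (a, b) (a', b')

/-- Conditional state `Tr_A[ρ (|α⟩⟨α| ⊗ I_B)]` for a non-degenerate projective effect: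
entries `∑_{a,a'} conj (α a) * α a' * ρ_{(a,b),(a',b')}`. -/
def condState {dA dB : ℕ} (ρ : Matrix (Fin dA × Fin dB) (Fin dA × Fin dB) ℂ)
    (α : Fin dA → ℂ) : Matrix (Fin dB) (Fin dB) ℂ :=
  Matrix.of fun b b' => ∑ a, ∑ a', (starRingEnd ℂ) (α a) * α a' * ρ (a, b) (a', b')

/-- Tensor product vector `α ⊗ β` in `ℂ^{dA} ⊗ ℂ^{dB}`. -/
def tensor2 {dA dB : ℕ} (α : Fin dA → ℂ) (β : Fin dB → ℂ) : Fin dA × Fin dB → ℂ :=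
  fun p => α p.1 * β p.2

/-- Tensor product vector `α ⊗ β ⊗ γ` in `ℂ^{dA} ⊗ ℂ^{dB} ⊗ ℂ^{dC}`. -/
def tensor3 {dA dB dC : ℕ} (α : Fin dA → ℂ) (β : Fin dB → ℂ) (γ : Fin dC → ℂ) :
    Fin dA × Fin dB × Fin dC → ℂ :=
  fun p => α p.1 * β p.2.1 * γ p.2.2

/-- Reduced state of a tripartite pure state on AB:
`(ρ_Ψ)_{(a,b),(a',b')} = ∑_c Ψ_{a,b,c} conj (Ψ_{a',b',c})`. -/
def reducedAB {dA dB dC : ℕ} (Ψ : Fin dA × Fin dB × Fin dC → ℂ) :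
    Matrix (Fin dA × Fin dB) (Fin dA × Fin dB) ℂ :=
  Matrix.of fun p q => ∑ c, Ψ (p.1, p.2, c) * (starRingEnd ℂ) (Ψ (q.1, q.2, c))

/-- Partial contraction `⟨α|Ψ⟩ ∈ ℂ^{dB} ⊗ ℂ^{dC}`, with components
`∑_a conj (α a) Ψ_{a,b,c}`. -/
def aContract {dA dB dC : ℕ} (α : Fin dA → ℂ) (Ψ : Fin dA × Fin dB × Fin dC → ℂ) :
    Fin dB × Fin dC → ℂ :=
  fun p => ∑ a, (starRingEnd ℂ) (α a) * Ψ (a, p.1, p.2)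

/-- A family of vectors is orthonormal. For `n = d` this is an orthonormal basis of `ℂ^d`. -/
def OrthonormalFam {d n : ℕ} (α : Fin n → Fin d → ℂ) : Prop :=
  ∀ i j, cinner (α i) (α j) = if i = j then 1 else 0

/-- `ρ` is unsteerable from Alice's side for non-degenerate projective measurements:
there is a finite local-hidden-state ensemble reproducing all conditional states of
every non-degenerate projective measurement (orthonormal basis) on A. -/
def Unsteerable {dA dB : ℕ} (ρ : Matrix (Fin dA × Fin dB) (Fin dA × Fin dB) ℂ) : Prop :=
  ∃ (n : ℕ) (P : Fin n → ℝ) (σ : Fin n → Matrix (Fin dB) (Fin dB) ℂ),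
    (∀ ξ, 0 ≤ P ξ) ∧ (∑ ξ, P ξ = 1) ∧ (∀ ξ, IsState (σ ξ)) ∧
    ∀ α : Fin dA → Fin dA → ℂ, OrthonormalFam α →
      ∃ Q : Fin dA → Fin n → ℝ,
        (∀ a ξ, 0 ≤ Q a ξ ∧ Q a ξ ≤ 1) ∧ (∀ ξ, ∑ a, Q a ξ = 1) ∧
        ∀ a, condState ρ (α a) = ∑ ξ, ((Q a ξ * P ξ : ℝ) : ℂ) • σ ξ

/-- `ρ` is separable: a finite convex-type combination of product states. -/
def Separable {dA dB : ℕ} (ρ : Matrix (Fin dA × Fin dB) (Fin dA × Fin dB) ℂ) : Prop :=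
  ∃ (n : ℕ) (q : Fin n → ℝ) (ρA : Fin n → Matrix (Fin dA) (Fin dA) ℂ)
    (ρB : Fin n → Matrix (Fin dB) (Fin dB) ℂ),
    (∀ k, 0 ≤ q k) ∧ (∀ k, IsState (ρA k)) ∧ (∀ k, IsState (ρB k)) ∧
    ρ = ∑ k, ((q k : ℂ)) • (ρA k ⊗ₖ ρB k)

/-- A local hidden state model for an assemblage `As`, with outcomes `A`, measurement
labels `X`, hidden states `σ` with weights `P`, and response probabilities `R`. -/
def LHSModel {dB : ℕ} {A X : Type*} [Fintype A] {n : ℕ}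
    (As : A → X → Matrix (Fin dB) (Fin dB) ℂ)
    (P : Fin n → ℝ) (σ : Fin n → Matrix (Fin dB) (Fin dB) ℂ)
    (R : A → X → Fin n → ℝ) : Prop :=
  (∀ ξ, 0 ≤ P ξ) ∧ (∑ ξ, P ξ = 1) ∧ (∀ ξ, IsState (σ ξ)) ∧
  (∀ a x ξ, 0 ≤ R a x ξ ∧ R a x ξ ≤ 1) ∧ (∀ x ξ, ∑ a, R a x ξ = 1) ∧
  (∀ a x, As a x = ∑ ξ, ((R a x ξ * P ξ : ℝ) : ℂ) • σ ξ)

/-- Standard basis vector of `ℂ^d`. -/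
def stdb {d : ℕ} (a : Fin d) : Fin d → ℂ := fun i => if i = a then 1 else 0

/-!
Unsteerability puts all conditional states `⟨x|ρ|x⟩` into a cone generated by finitely many
positive semidefinite matrices. On such a cone `‖M w‖ ≤ C ⟨w, M w⟩` for each fixed `w`, which is
much stronger than the bound `‖M w‖² ≤ C ⟨w, M w⟩` that positivity alone provides. If `⟨x|ρ|x⟩`
kills `w`, comparing first-order terms of this inequality along `x + t y` and `x - t y` as `t → 0`
shows that the off-diagonal blocks `⟨x|ρ|y⟩` and `⟨y|ρ|x⟩` kill `w` too. For `x = α_a` and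
`y = α_b`, the block `⟨x|ρ|y⟩` therefore kills `β_a^⊥ + β_b^⊥`, which is the whole space because
`β_a` and `β_b` are not proportional. Hence `ρ` is block diagonal in the basis `α`.
-/

open scoped Matrix

section Sesquilinear

variable {E V : Type*} [AddCommGroup E] [Module ℂ E] [NormedAddCommGroup V] [NormedSpace ℂ V]
  {S : E →ₗ⋆[ℂ] E →ₗ[ℂ] V}

lemma add_swap_eq_zero_of_norm_diag_le {ℓ : V →ₗ[ℝ] ℝ} (hS : ∀ x, ‖S x x‖ ≤ ℓ (S x x)) {x : E}
    (hx : S x x = 0) (y : E) : S x y + S y x = 0 := by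
  set D := S x y + S y x with hD
  have hline (t : ℝ) : S (x + (t : ℂ) • y) (x + (t : ℂ) • y) = t • D + t ^ 2 • S y y := by
    simp only [map_add, LinearMap.add_apply, LinearMap.map_smulₛₗ, LinearMap.smul_apply, hx, hD,
      Complex.conj_ofReal, RingHom.id_apply]
    simp only [Complex.coe_smul]
    module
  have hbound (t : ℝ) : ‖t • D + t ^ 2 • S y y‖ ≤ t * ℓ D + t ^ 2 * ℓ (S y y) := by
    have := hS (x + (t : ℂ) • y)
    rwa [hline, map_add, map_smul, map_smul, smul_eq_mul, smul_eq_mul] at this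
  -- The linear terms of `ℓ` cancel between `t` and `-t`.
  have hlin {t : ℝ} (ht : 0 < t) : ‖D‖ ≤ t * ℓ (S y y) := by
    have hsub : (2 * t) • D = (t • D + t ^ 2 • S y y) - ((-t) • D + (-t) ^ 2 • S y y) := by module
    have hnorm := (norm_sub_le _ _).trans (add_le_add (hbound t) (hbound (-t)))
    rw [← hsub, norm_smul, Real.norm_of_nonneg (by positivity)] at hnorm
    nlinarith
  have hlim : Filter.Tendsto (fun t : ℝ => t * ℓ (S y y)) (nhdsWithin 0 (Set.Ioi 0)) (nhds 0) :=
    ((continuous_mul_const _).tendsto' 0 0 (zero_mul _)).mono_left nhdsWithin_le_nhds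
  exact norm_le_zero_iff.1 (ge_of_tendsto hlim (eventually_mem_nhdsWithin.mono fun _ => hlin))

lemma eq_zero_of_norm_diag_le {ℓ : V →ₗ[ℝ] ℝ} (hS : ∀ x, ‖S x x‖ ≤ ℓ (S x x)) {x : E}
    (hx : S x x = 0) (y : E) : S x y = 0 ∧ S y x = 0 := by
  have hre := add_swap_eq_zero_of_norm_diag_le hS hx y
  have him := add_swap_eq_zero_of_norm_diag_le hS hx (Complex.I • y)
  simp only [LinearMap.map_smulₛₗ, LinearMap.smul_apply, LinearMap.neg_apply, RingHom.id_apply,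
    Complex.conj_I, neg_smul, ← sub_eq_add_neg, ← smul_sub, smul_eq_zero, Complex.I_ne_zero,
    false_or] at him
  have hxy : S x y = 0 := by
    linear_combination (norm := module) (1 / 2 : ℂ) • hre + (1 / 2 : ℂ) • him
  exact ⟨hxy, by rwa [hxy, zero_add] at hre⟩

end Sesquilinear

section FiniteCone

variable {κ : Type*} {s : Set (Matrix κ κ ℂ)}

lemma posSemidef_of_mem_hull (hs : ∀ M ∈ s, M.PosSemidef) {M : Matrix κ κ ℂ}
    (hM : M ∈ PointedCone.hull ℝ s) : M.PosSemidef := by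
  induction hM using Submodule.span_induction with
  | mem M hM => exact hs M hM
  | zero => exact Matrix.PosSemidef.zero
  | add M N _ _ hM hN => exact hM.add hN
  | smul r M _ hM => exact hM.smul r.2

variable [Fintype κ]

lemma exists_norm_mulVec_le_of_posSemidef {M : Matrix κ κ ℂ} (hM : M.PosSemidef) (w : κ → ℂ) :
    ∃ C, 0 ≤ C ∧ ‖M *ᵥ w‖ ≤ C * (star w ⬝ᵥ M *ᵥ w).re := by
  have hnonneg := hM.dotProduct_mulVec_nonneg w
  refine ⟨‖M *ᵥ w‖ / (star w ⬝ᵥ M *ᵥ w).re,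
    div_nonneg (norm_nonneg _) (Complex.nonneg_iff.1 hnonneg).1, ?_⟩
  by_cases hre : (star w ⬝ᵥ M *ᵥ w).re = 0
  · have hform : star w ⬝ᵥ M *ᵥ w = 0 := Complex.ext hre (Complex.nonneg_iff.1 hnonneg).2.symm
    simp [(hM.dotProduct_mulVec_zero_iff w).1 hform]
  · rw [div_mul_cancel₀ _ hre]

lemma exists_forall_hull_norm_mulVec_le (hfin : s.Finite) (hs : ∀ M ∈ s, M.PosSemidef)
    (w : κ → ℂ) :
    ∃ C : ℝ, ∀ M ∈ PointedCone.hull ℝ s, ‖M *ᵥ w‖ ≤ C * (star w ⬝ᵥ M *ᵥ w).re := by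
  choose! c hc hcs using fun M hM => exists_norm_mulVec_le_of_posSemidef (hs M hM) w
  refine ⟨∑ M ∈ hfin.toFinset, c M, fun M hM => ?_⟩
  induction hM using Submodule.span_induction with
  | mem M hM =>
    have hle : c M ≤ ∑ M ∈ hfin.toFinset, c M :=
      Finset.single_le_sum (fun N hN => hc N (hfin.mem_toFinset.1 hN)) (hfin.mem_toFinset.2 hM)
    have hnonneg := (Complex.nonneg_iff.1 ((hs M hM).dotProduct_mulVec_nonneg w)).1
    exact (hcs M hM).trans (mul_le_mul_of_nonneg_right hle hnonneg)
  | zero => simp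
  | add M N _ _ hM hN =>
    rw [Matrix.add_mulVec, dotProduct_add, Complex.add_re, mul_add]
    exact (norm_add_le _ _).trans (add_le_add hM hN)
  | smul r M _ hM =>
    change ‖((r : ℝ) • M) *ᵥ w‖ ≤ _ * (star w ⬝ᵥ ((r : ℝ) • M) *ᵥ w).re
    rw [Matrix.smul_mulVec, dotProduct_smul, norm_smul, Real.norm_of_nonneg r.2, Complex.smul_re,
      smul_eq_mul, mul_left_comm]
    exact mul_le_mul_of_nonneg_left hM r.2

end FiniteCone

section KillsOrthogonal

variable {m n : Type*} [Fintype n] {M : Matrix m n ℂ} {u v : n → ℂ}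

lemma exists_eq_vecMulVec_star (hu : ∀ w, star u ⬝ᵥ w = 0 → M *ᵥ w = 0) :
    ∃ x, M = Matrix.vecMulVec x (star u) := by
  rcases eq_or_ne u 0 with rfl | hu0
  · exact ⟨0, Matrix.ext_of_mulVec_single fun j => by
      rw [hu _ (by simp), Matrix.zero_vecMulVec, Matrix.zero_mulVec]⟩
  have huu : star u ⬝ᵥ u ≠ 0 := dotProduct_star_self_eq_zero.not.2 hu0
  refine ⟨(star u ⬝ᵥ u)⁻¹ • M *ᵥ u, Matrix.ext_of_mulVec_single fun j => ?_⟩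
  set e : n → ℂ := Pi.single j 1
  have horth : star u ⬝ᵥ (e - ((star u ⬝ᵥ u)⁻¹ * (star u ⬝ᵥ e)) • u) = 0 := by
    rw [dotProduct_sub, dotProduct_smul, smul_eq_mul]
    field_simp
    ring
  have hproj := hu _ horth
  rw [Matrix.mulVec_sub, Matrix.mulVec_smul, sub_eq_zero] at hproj
  rw [hproj, Matrix.vecMulVec_mulVec, op_smul_eq_smul, smul_smul, mul_comm]

lemma eq_zero_of_mulVec_orthogonal_eq_zero (huv : LinearIndependent ℂ ![u, v])
    (hu : ∀ w, star u ⬝ᵥ w = 0 → M *ᵥ w = 0) (hv : ∀ w, star v ⬝ᵥ w = 0 → M *ᵥ w = 0) :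
    M = 0 := by
  obtain ⟨x, hx⟩ := exists_eq_vecMulVec_star hu
  obtain ⟨y, hy⟩ := exists_eq_vecMulVec_star hv
  have hrel (i : m) : star (x i) • u + (-star (y i)) • v = 0 := by
    ext j
    have hij := congrArg star (congrFun (congrFun (hx.symm.trans hy) i) j)
    simp only [Matrix.vecMulVec_apply, Pi.star_apply, star_mul', star_star] at hij
    simp only [Pi.add_apply, Pi.smul_apply, smul_eq_mul, neg_mul, hij, add_neg_cancel,
      Pi.zero_apply]
  ext i j
  have hxi := (LinearIndependent.pair_iff.1 huv _ _ (hrel i)).1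
  simp [hx, Matrix.vecMulVec_apply, star_eq_zero.1 hxi]

end KillsOrthogonal

lemma pairwise_linearIndependent_pair {ι R V : Type*} [Semiring R] [AddCommMonoid V] [Module R V]
    {v : ι → V} (hv : LinearIndependent R v) :
    Pairwise fun i j => LinearIndependent R ![v i, v j] := fun i j hij => by
  have hinj : Function.Injective ![i, j] := by
    intro k l
    fin_cases k <;> fin_cases l <;> simp [hij, hij.symm]
  have hcomp : v ∘ ![i, j] = ![v i, v j] := by
    ext k
    fin_cases k <;> rfl
  change LinearIndependent R ![v i, v j]
  exact hcomp ▸ hv.comp ![i, j] hinj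

section OrthonormalFam

variable {d n : ℕ}

lemma orthonormalFam_iff {α : Fin n → Fin d → ℂ} :
    OrthonormalFam α ↔ Orthonormal ℂ fun i => WithLp.toLp 2 (α i) := by
  simp [orthonormal_iff_ite, OrthonormalFam, cinner, PiLp.inner_apply, mul_comm]

lemma OrthonormalFam.linearIndependent {α : Fin n → Fin d → ℂ} (hα : OrthonormalFam α) :
    LinearIndependent ℂ α :=
  (orthonormalFam_iff.1 hα).linearIndependent.map' (WithLp.linearEquiv 2 ℂ (Fin d → ℂ)).toLinearMap
    (LinearEquiv.ker _)

lemma exists_orthonormalFam_smul_eq {γ : Fin d → ℂ} (hγ : γ ≠ 0) :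
    ∃ (α : Fin d → Fin d → ℂ) (i : Fin d) (r : ℝ), OrthonormalFam α ∧ γ = (r : ℂ) • α i := by
  obtain ⟨i, -⟩ := Function.ne_iff.1 hγ
  set g : EuclideanSpace ℂ (Fin d) := WithLp.toLp 2 γ with hg
  have hg0 : g ≠ 0 := by simpa [hg] using hγ
  have hunit : Orthonormal ℂ (Set.domRestrict {i} fun _ : Fin d => (‖g‖⁻¹ : ℂ) • g) :=
    ⟨fun _ => by simpa using norm_smul_inv_norm (𝕜 := ℂ) hg0,
      fun j k hjk => (hjk (Subsingleton.elim j k)).elim⟩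
  obtain ⟨b, hb⟩ := hunit.exists_orthonormalBasis_extension_of_card_eq (by simp)
  refine ⟨fun a => WithLp.ofLp (b a), i, ‖g‖, orthonormalFam_iff.2 b.orthonormal, ?_⟩
  have hnorm : (‖g‖ : ℂ) ≠ 0 := by simpa using hg0
  change γ = (‖g‖ : ℂ) • WithLp.ofLp (b i)
  rw [hb i rfl, WithLp.ofLp_smul, smul_inv_smul₀ hnorm]

end OrthonormalFam

section CondBlock

variable {ι κ : Type*} [Fintype ι]

/-- The block `⟨x|ρ|y⟩` of a bipartite matrix `ρ`, obtained by contracting the first factor with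
`x` on the left and `y` on the right, as a sesquilinear map in `x` and `y`. Its values at `x = y`
are the conditional states. -/
def condBlock (ρ : Matrix (ι × κ) (ι × κ) ℂ) : (ι → ℂ) →ₗ⋆[ℂ] (ι → ℂ) →ₗ[ℂ] Matrix κ κ ℂ :=
  LinearMap.mk₂'ₛₗ (starRingEnd ℂ) (RingHom.id ℂ)
    (fun x y => Matrix.of fun b b' => ∑ a, ∑ a', (starRingEnd ℂ) (x a) * y a' * ρ (a, b) (a', b'))
    (fun x x' y => by ext; simp [add_mul, Finset.sum_add_distrib])
    (fun c x y => by ext; simp [Finset.mul_sum, mul_assoc])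
    (fun x y y' => by ext; simp [mul_add, add_mul, Finset.sum_add_distrib])
    (fun c x y => by ext; simp [Finset.mul_sum, mul_assoc, mul_left_comm])

lemma condBlock_apply (ρ : Matrix (ι × κ) (ι × κ) ℂ) (x y : ι → ℂ) (b b' : κ) :
    condBlock ρ x y b b' = ∑ a, ∑ a', (starRingEnd ℂ) (x a) * y a' * ρ (a, b) (a', b') := rfl

lemma condBlock_injective :
    Function.Injective (condBlock : Matrix (ι × κ) (ι × κ) ℂ → _) := by
  intro ρ τ h
  ext ⟨i, b⟩ ⟨j, b'⟩
  simpa [condBlock_apply, Pi.single_apply] using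
    congrFun (congrFun (LinearMap.congr_fun₂ h (Pi.single i 1) (Pi.single j 1)) b) b'

end CondBlock

section Bipartite

variable {dA dB : ℕ}

lemma condState_eq_condBlock (ρ : Matrix (Fin dA × Fin dB) (Fin dA × Fin dB) ℂ) (γ : Fin dA → ℂ) :
    condState ρ γ = condBlock ρ γ γ := rfl

lemma condBlock_sum_proj_tensor2 {n : ℕ} (p : Fin n → ℂ) (α : Fin n → Fin dA → ℂ)
    (β : Fin n → Fin dB → ℂ) (x y : Fin dA → ℂ) :
    condBlock (∑ c, p c • proj (tensor2 (α c) (β c))) x y =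
      ∑ c, (p c * (cinner x (α c) * cinner (α c) y)) • proj (β c) := by
  ext b b'
  simp only [condBlock_apply, Matrix.sum_apply, Matrix.smul_apply, proj, tensor2, cinner,
    Matrix.of_apply, smul_eq_mul, map_mul, Finset.mul_sum, Finset.sum_mul]
  calc _ = ∑ a, ∑ c, ∑ a', (starRingEnd ℂ) (x a) * y a' * (p c *
            (α c a * β c b * ((starRingEnd ℂ) (α c a') * (starRingEnd ℂ) (β c b')))) :=
        Finset.sum_congr rfl fun a _ => Finset.sum_comm
    _ = _ := by
        rw [Finset.sum_comm]
        refine Finset.sum_congr rfl fun c _ => ?_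
        rw [Finset.sum_comm]
        exact Finset.sum_congr rfl fun a' _ => Finset.sum_congr rfl fun a _ => by ring

lemma eq_sum_proj_tensor2_of_condBlock {ρ : Matrix (Fin dA × Fin dB) (Fin dA × Fin dB) ℂ}
    {α : Fin dA → Fin dA → ℂ} (hα : OrthonormalFam α) {β : Fin dA → Fin dB → ℂ} {p : Fin dA → ℂ}
    (hdiag : ∀ a, condBlock ρ (α a) (α a) = p a • proj (β a))
    (hoff : ∀ a b, a ≠ b → condBlock ρ (α a) (α b) = 0) :
    ρ = ∑ a, p a • proj (tensor2 (α a) (β a)) := by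
  let B := basisOfLinearIndependentOfCardEqFinrank' α hα.linearIndependent (by simp)
  refine condBlock_injective (LinearMap.ext_basis B B fun a b => ?_)
  simp only [B, coe_basisOfLinearIndependentOfCardEqFinrank', condBlock_sum_proj_tensor2, hα _ _]
  rcases eq_or_ne a b with rfl | hab
  · simp [hdiag]
  · simp [hoff a b hab, hab]

lemma isState_proj {ι : Type*} [Fintype ι] {u : ι → ℂ} (hu : IsUnitVec u) : IsState (proj u) :=
  ⟨Matrix.posSemidef_vecMulVec_self_star u, by
    rw [← hu]
    simp [Matrix.trace, proj, cinner, mul_comm]⟩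

lemma smul_proj_mulVec_eq_zero {ι : Type*} [Fintype ι] {u w : ι → ℂ} (c : ℂ)
    (huw : star u ⬝ᵥ w = 0) : (c • proj u) *ᵥ w = 0 := by
  change (c • Matrix.vecMulVec u (star u)) *ᵥ w = 0
  simp [Matrix.smul_mulVec, Matrix.vecMulVec_mulVec, huw]

lemma proj_tensor2 (x : Fin dA → ℂ) (v : Fin dB → ℂ) :
    proj (tensor2 x v) = proj x ⊗ₖ proj v := by
  ext ⟨i, b⟩ ⟨j, b'⟩
  simp [proj, tensor2, Matrix.kroneckerMap_apply, mul_mul_mul_comm]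

lemma separable_sum_proj_tensor2 {n : ℕ} {α : Fin n → Fin dA → ℂ} (hα : ∀ a, IsUnitVec (α a))
    {β : Fin n → Fin dB → ℂ} (hβ : ∀ a, IsUnitVec (β a)) {p : Fin n → ℝ} (hp : ∀ a, 0 ≤ p a) :
    Separable (∑ a, (p a : ℂ) • proj (tensor2 (α a) (β a))) :=
  ⟨n, p, fun a => proj (α a), fun a => proj (β a), hp, fun a => isState_proj (hα a),
    fun a => isState_proj (hβ a), by simp only [proj_tensor2]⟩

end Bipartite

section Steering

variable {dA dB : ℕ} {ρ : Matrix (Fin dA × Fin dB) (Fin dA × Fin dB) ℂ}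

lemma Unsteerable.exists_finite_forall_condState_mem_hull (hun : Unsteerable ρ) :
    ∃ s : Set (Matrix (Fin dB) (Fin dB) ℂ), s.Finite ∧ (∀ M ∈ s, M.PosSemidef) ∧
      ∀ γ, condState ρ γ ∈ PointedCone.hull ℝ s := by
  obtain ⟨n, P, σ, hP, -, hσ, hmodel⟩ := hun
  refine ⟨Set.range σ, Set.finite_range σ, Set.forall_mem_range.2 fun ξ => (hσ ξ).1, fun γ => ?_⟩
  rcases eq_or_ne γ 0 with rfl | hγ
  · simp [condState_eq_condBlock]
  obtain ⟨α, i, r, hα, rfl⟩ := exists_orthonormalFam_smul_eq hγ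
  obtain ⟨Q, hQ, -, hQσ⟩ := hmodel α hα
  have hscale : condState ρ ((r : ℂ) • α i) = (r ^ 2) • condState ρ (α i) := by
    rw [condState_eq_condBlock, condState_eq_condBlock, map_smul, LinearMap.map_smulₛₗ,
      LinearMap.smul_apply, Complex.conj_ofReal, Complex.coe_smul, Complex.coe_smul, smul_smul, sq]
  rw [hscale, hQσ]
  refine PointedCone.smul_mem _ (sq_nonneg r) (Submodule.sum_mem _ fun ξ _ => ?_)
  rw [Complex.coe_smul]
  exact PointedCone.smul_mem _ (mul_nonneg (hQ i ξ).1 (hP ξ))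
    (PointedCone.subset_hull (Set.mem_range_self ξ))

lemma Unsteerable.posSemidef_condState (hun : Unsteerable ρ) (γ : Fin dA → ℂ) :
    (condState ρ γ).PosSemidef := by
  obtain ⟨s, -, hs, hmem⟩ := hun.exists_finite_forall_condState_mem_hull
  exact posSemidef_of_mem_hull hs (hmem γ)

lemma Unsteerable.condBlock_mulVec_eq_zero (hun : Unsteerable ρ) {x : Fin dA → ℂ}
    {w : Fin dB → ℂ} (hxw : condState ρ x *ᵥ w = 0) (y : Fin dA → ℂ) :
    condBlock ρ x y *ᵥ w = 0 ∧ condBlock ρ y x *ᵥ w = 0 := by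
  obtain ⟨s, hfin, hs, hmem⟩ := hun.exists_finite_forall_condState_mem_hull
  obtain ⟨C, hC⟩ := exists_forall_hull_norm_mulVec_le hfin hs w
  let ℓ : (Fin dB → ℂ) →ₗ[ℝ] ℝ :=
    C • Complex.reLm ∘ₗ (dotProductBilin ℂ ℂ (star w)).restrictScalars ℝ
  exact eq_zero_of_norm_diag_le (S := (condBlock ρ).compr₂ₛₗ ((Matrix.mulVecBilin ℂ ℂ).flip w))
    (ℓ := ℓ) (fun γ => hC _ (hmem γ)) hxw y

lemma Unsteerable.condBlock_eq_zero (hun : Unsteerable ρ) {x y : Fin dA → ℂ} {u v : Fin dB → ℂ}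
    (huv : LinearIndependent ℂ ![u, v]) {p q : ℂ} (hx : condState ρ x = p • proj u)
    (hy : condState ρ y = q • proj v) : condBlock ρ x y = 0 := by
  refine eq_zero_of_mulVec_orthogonal_eq_zero huv (fun w hw => ?_) (fun w hw => ?_)
  · exact (hun.condBlock_mulVec_eq_zero (hx ▸ smul_proj_mulVec_eq_zero p hw) y).1
  · exact (hun.condBlock_mulVec_eq_zero (hy ▸ smul_proj_mulVec_eq_zero q hw) x).2

end Steering

theorem stmt14_general {dA dB : ℕ} (ρ : Matrix (Fin dA × Fin dB) (Fin dA × Fin dB) ℂ)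
    (α : Fin dA → Fin dA → ℂ) (hα : OrthonormalFam α)
    (β : Fin dA → Fin dB → ℂ) (hβ : ∀ a, IsUnitVec (β a))
    (hind : Pairwise fun a b => LinearIndependent ℂ ![β a, β b])
    (p : Fin dA → ℝ) (h : ∀ a, condState ρ (α a) = (p a : ℂ) • proj (β a))
    (hun : Unsteerable ρ) :
    ρ = (∑ a, ((p a : ℂ)) • proj (tensor2 (α a) (β a))) ∧ Separable ρ := by
  have hp (a : Fin dA) : 0 ≤ p a := by
    have htrace := (hun.posSemidef_condState (α a)).trace_nonneg
    rwa [h, Matrix.trace_smul, (isState_proj (hβ a)).2, smul_eq_mul, mul_one,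
      Complex.zero_le_real] at htrace
  have hρ : ρ = ∑ a, (p a : ℂ) • proj (tensor2 (α a) (β a)) :=
    eq_sum_proj_tensor2_of_condBlock hα h fun a b hab =>
      hun.condBlock_eq_zero (hind hab) (h a) (h b)
  refine ⟨hρ, ?_⟩
  rw [hρ]
  exact separable_sum_proj_tensor2 (fun a => (hα a a).trans (if_pos rfl)) hβ hp

/-- if a non-degenerate projective measurement steers Bob's system to
linearly independent pure states, then an unsteerable shared state must equal
`∑_a p_a |α_a⊗β_a⟩⟨α_a⊗β_a|`, hence be separable. -/
theorem stmt14 {dA dB : ℕ} (ρ : Matrix (Fin dA × Fin dB) (Fin dA × Fin dB) ℂ)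
    (hρ : IsState ρ)
    (α : Fin dA → Fin dA → ℂ) (hα : OrthonormalFam α)
    (β : Fin dA → Fin dB → ℂ) (hβ : ∀ a, IsUnitVec (β a))
    (hind : LinearIndependent ℂ β)
    (p : Fin dA → ℝ) (hp : ∀ a, 0 < p a)
    (h : ∀ a, condState ρ (α a) = (p a : ℂ) • proj (β a))
    (hun : Unsteerable ρ) :
    ρ = (∑ a, ((p a : ℂ)) • proj (tensor2 (α a) (β a))) ∧ Separable ρ :=
  stmt14_general ρ α hα β hβ (pairwise_linearIndependent_pair hind) p h hun

end

end EPR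
end

section
/- Let ρ be a bipartite state on ℂ^{dA}⊗ℂ^{dB} with an orthonormal basis {α_a}_{a=1}^{dA} of ℂ^{dA}, linearly independent unit vectors β_1,…,β_{dA} in ℂ^{dB}, and p_a > 0 such that Tr_A[ρ(|α_a⟩⟨α_a|⊗I_B)] = p_a|β_a⟩⟨β_a| for every a. If ⟨α_i⊗β_i, ρ(α_j⊗β_j)⟩ ≠ 0 for some i ≠ j, then ρ is steerable from Alice's side for non-degenerate projective measurements (and in particular nonseparable). -/
/-!
Suppose a local hidden state model exists. In the basis `α` the conditional states are multiples of
`|β a⟩⟨β a|`, so every hidden state of positive weight is supported on one of the lines `ℂ β a`.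
Hence if no `β a` overlaps with both `x` and `y`, then `⟨x, σ ξ y⟩ = 0` for every such hidden state.
The same hidden states serve every measurement, so `⟨u ⊗ x, ρ (u ⊗ y)⟩ = 0` for all unit vectors
`u`, and polarization gives `⟨u ⊗ x, ρ (v ⊗ y)⟩ = 0` for all `u` and `v`.

For a family `w` dual to `β` and `i ≠ j` this applies to `x = w i` and `y = w j`. Since the
conditional state at `α k` is pure, `ρ (α k ⊗ x)` depends on `x` only through `⟨β k, x⟩`, so
`ρ (α k ⊗ w k) = ρ (α k ⊗ β k)`, and the cross term `⟨α i ⊗ β i, ρ (α j ⊗ β j)⟩` vanishes.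
-/

open scoped BigOperators Kronecker Classical ComplexOrder

namespace EPR

noncomputable section

section InnerProduct

variable {ι : Type*} [Fintype ι]

theorem cinner_eq_dotProduct (u v : ι → ℂ) : cinner u v = star u ⬝ᵥ v := rfl

theorem cinner_eq_inner (u v : ι → ℂ) :
    cinner u v = inner ℂ (WithLp.toLp 2 u) (WithLp.toLp 2 v) := by
  rw [EuclideanSpace.inner_toLp_toLp, cinner_eq_dotProduct, dotProduct_comm]

theorem star_cinner (u v : ι → ℂ) : star (cinner u v) = cinner v u := by
  simp only [cinner_eq_inner, ← inner_conj_symm (WithLp.toLp 2 v), starRingEnd_apply]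

theorem isUnitVec_iff_norm_eq_one (u : ι → ℂ) : IsUnitVec u ↔ ‖WithLp.toLp 2 u‖ = 1 := by
  rw [IsUnitVec, cinner_eq_inner, inner_self_eq_norm_sq_to_K, ← RCLike.ofReal_pow,
    ← RCLike.ofReal_one (K := ℂ), RCLike.ofReal_inj]
  exact pow_eq_one_iff_of_nonneg (norm_nonneg (WithLp.toLp 2 u)) two_ne_zero

theorem orthonormalFam_iff_orthonormal {d n : ℕ} (α : Fin n → Fin d → ℂ) :
    OrthonormalFam α ↔ Orthonormal ℂ fun k => WithLp.toLp 2 (α k) := by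
  simp only [OrthonormalFam, orthonormal_iff_ite, cinner_eq_inner]

theorem IsUnitVec.exists_orthonormalFam {d : ℕ} {u : Fin d → ℂ} (hu : IsUnitVec u) :
    ∃ (α : Fin d → Fin d → ℂ) (i : Fin d), OrthonormalFam α ∧ α i = u := by
  obtain ⟨i⟩ : Nonempty (Fin d) := by
    by_contra hempty
    rw [not_nonempty_iff] at hempty
    simp [IsUnitVec, cinner] at hu
  have hsingle : Orthonormal ℂ (Set.domRestrict {i} fun _ : Fin d => WithLp.toLp 2 u) := by
    rw [orthonormal_subsingleton_iff]
    exact fun _ => (isUnitVec_iff_norm_eq_one u).1 hu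
  obtain ⟨b, hb⟩ := hsingle.exists_orthonormalBasis_extension_of_card_eq (by simp)
  exact ⟨fun k => (b k).ofLp, i, (orthonormalFam_iff_orthonormal _).2 b.orthonormal,
    by simp only [hb i rfl]⟩

theorem exists_cinner_eq_ite_of_linearIndependent {κ : Type*} [DecidableEq κ] {β : κ → ι → ℂ}
    (hβ : LinearIndependent ℂ β) :
    ∃ w : κ → ι → ℂ, ∀ k l, cinner (w k) (β l) = if k = l then 1 else 0 := by
  have hcoord : ∀ k, ∃ f : (ι → ℂ) →ₗ[ℂ] ℂ, ∀ l, f (β l) = if k = l then 1 else 0 := by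
    intro k
    obtain ⟨f, hf⟩ := LinearMap.exists_extend (Finsupp.lapply k ∘ₗ hβ.repr)
    refine ⟨f, fun l => ?_⟩
    have hl : β l ∈ Submodule.span ℂ (Set.range β) := Submodule.subset_span ⟨l, rfl⟩
    have hfl := LinearMap.congr_fun hf ⟨β l, hl⟩
    simpa [hβ.repr_eq_single l ⟨β l, hl⟩ rfl, Finsupp.single_apply, eq_comm] using hfl
  choose f hf using hcoord
  refine ⟨fun k => star ((dotProductEquiv ℂ ι).symm (f k)), fun k l => ?_⟩
  rw [← hf k l, cinner_eq_dotProduct, star_star]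
  exact LinearMap.congr_fun ((dotProductEquiv ℂ ι).apply_symm_apply (f k)) (β l)

end InnerProduct

section Matrices

variable {ι : Type*} [Fintype ι]

theorem cinner_mulVec_of_isHermitian {A : Matrix ι ι ℂ} (hA : A.IsHermitian) (u v : ι → ℂ) :
    cinner u (A.mulVec v) = cinner (A.mulVec u) v := by
  rw [cinner_eq_dotProduct, cinner_eq_dotProduct, Matrix.star_mulVec, hA.eq,
    Matrix.dotProduct_mulVec]

theorem cinner_mulVec_congr_of_isHermitian {A : Matrix ι ι ℂ} (hA : A.IsHermitian)
    {u u' v v' : ι → ℂ} (hu : A.mulVec u = A.mulVec u') (hv : A.mulVec v = A.mulVec v') :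
    cinner u (A.mulVec v) = cinner u' (A.mulVec v') := by
  rw [hv, cinner_mulVec_of_isHermitian hA, hu, ← cinner_mulVec_of_isHermitian hA]

theorem proj_mulVec (u v : ι → ℂ) : (proj u).mulVec v = cinner u v • u := by
  ext k
  simp only [Matrix.mulVec, dotProduct, proj, cinner, Matrix.of_apply, Pi.smul_apply, smul_eq_mul,
    Finset.sum_mul]
  exact Finset.sum_congr rfl fun _ _ => by ring

theorem smul_proj_mulVec_eq_zero_s15 (c : ℂ) {u v : ι → ℂ} (huv : cinner u v = 0) :
    (c • proj u).mulVec v = 0 := by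
  rw [Matrix.smul_mulVec, proj_mulVec, huv, zero_smul, smul_zero]

theorem mulVec_eq_zero_of_sum_mulVec_eq_zero {κ : Type*} {s : Finset κ} {A : κ → Matrix ι ι ℂ}
    (hA : ∀ k ∈ s, (A k).PosSemidef) {v : ι → ℂ} (hv : (∑ k ∈ s, A k).mulVec v = 0) {k : κ}
    (hk : k ∈ s) : (A k).mulVec v = 0 := by
  have hsum : ∑ k ∈ s, star v ⬝ᵥ (A k).mulVec v = 0 := by
    rw [← dotProduct_sum, ← Matrix.sum_mulVec, hv, dotProduct_zero]
  have hnonneg : ∀ k ∈ s, 0 ≤ star v ⬝ᵥ (A k).mulVec v := fun k hk =>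
    (hA k hk).dotProduct_mulVec_nonneg v
  exact ((hA k hk).dotProduct_mulVec_zero_iff v).1
    ((Finset.sum_eq_zero_iff_of_nonneg hnonneg).1 hsum k hk)

theorem mulVec_eq_zero_of_sum_smul_mulVec_eq_zero {κ : Type*} [Fintype κ] {A : κ → Matrix ι ι ℂ}
    (hA : ∀ k, (A k).PosSemidef) {c : κ → ℝ} (hc : ∀ k, 0 ≤ c k) {v : ι → ℂ}
    (hv : (∑ k, (c k : ℂ) • A k).mulVec v = 0) {k : κ} (hck : c k ≠ 0) :
    (A k).mulVec v = 0 := by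
  have hterm := mulVec_eq_zero_of_sum_mulVec_eq_zero
    (fun l _ => (hA l).smul (Complex.zero_le_real.2 (hc l))) hv (Finset.mem_univ k)
  rw [Matrix.smul_mulVec] at hterm
  exact (smul_eq_zero.1 hterm).resolve_left (Complex.ofReal_ne_zero.2 hck)

theorem eq_zero_of_forall_isUnitVec_cinner_mulVec_self {A : Matrix ι ι ℂ}
    (hA : ∀ u, IsUnitVec u → cinner u (A.mulVec u) = 0) : A = 0 := by
  have hinner : ∀ x : EuclideanSpace ℂ ι, inner ℂ (A.toEuclideanLin x) x = 0 := by
    intro x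
    rcases eq_or_ne x 0 with rfl | hx
    · exact inner_zero_right _
    have hunit : inner ℂ (A.toEuclideanLin (NormedSpace.normalize x))
        (NormedSpace.normalize x) = 0 := by
      have hquad := hA (NormedSpace.normalize x).ofLp
        ((isUnitVec_iff_norm_eq_one _).2 (NormedSpace.norm_normalize hx))
      rwa [cinner_eq_inner, inner_eq_zero_symm] at hquad
    rw [← NormedSpace.norm_smul_normalize x, LinearMap.map_smul_of_tower, inner_smul_left_eq_smul,
      inner_smul_right_eq_smul, hunit, smul_zero, smul_zero]
  exact (map_eq_zero_iff _ Matrix.toEuclideanLin.injective).1 ((inner_map_self_eq_zero _).1 hinner)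

end Matrices

section HiddenStates

variable {ι κ Ξ : Type*} [Fintype ι] [Fintype κ] [Fintype Ξ] {σ : Ξ → Matrix ι ι ℂ}

theorem cinner_hiddenState_mulVec_eq_zero (hσ : ∀ ξ, (σ ξ).PosSemidef) {P : Ξ → ℝ}
    (hP : ∀ ξ, 0 ≤ P ξ) {Q : κ → Ξ → ℝ} (hQ : ∀ a ξ, 0 ≤ Q a ξ) (hQsum : ∀ ξ, ∑ a, Q a ξ = 1)
    {p : κ → ℂ} {β : κ → ι → ℂ} (hβ : ∀ a, p a • proj (β a) = ∑ ξ, ((Q a ξ * P ξ : ℝ) : ℂ) • σ ξ)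
    {x y : ι → ℂ} (hxy : ∀ a, cinner (β a) x = 0 ∨ cinner (β a) y = 0) {ξ : Ξ} (hξ : P ξ ≠ 0) :
    cinner x ((σ ξ).mulVec y) = 0 := by
  obtain ⟨a, -, ha⟩ : ∃ a ∈ Finset.univ, Q a ξ ≠ 0 :=
    Finset.exists_ne_zero_of_sum_ne_zero (by simp [hQsum])
  have hkill : ∀ v, cinner (β a) v = 0 → (σ ξ).mulVec v = 0 := fun v hv =>
    mulVec_eq_zero_of_sum_smul_mulVec_eq_zero hσ (fun η => mul_nonneg (hQ a η) (hP η))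
      (hβ a ▸ smul_proj_mulVec_eq_zero_s15 (p a) hv) (mul_ne_zero ha hξ)
  rcases hxy a with hx | hy
  · rw [cinner_mulVec_of_isHermitian (hσ ξ).isHermitian, hkill x hx, cinner_eq_dotProduct,
      star_zero, zero_dotProduct]
  · rw [hkill y hy, cinner_eq_dotProduct, dotProduct_zero]

end HiddenStates

section Bipartite

variable {dA dB : ℕ} {ρ : Matrix (Fin dA × Fin dB) (Fin dA × Fin dB) ℂ}

/-- The operator `(I_A ⊗ ⟨x|) ρ (I_A ⊗ |y⟩)` on `ℂ^{dA}`, obtained by contracting Bob's system. It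
turns the values `⟨u ⊗ x, ρ (v ⊗ y)⟩` for fixed `x` and `y` into a sesquilinear form in `u`, `v`. -/
def bContract (ρ : Matrix (Fin dA × Fin dB) (Fin dA × Fin dB) ℂ) (x y : Fin dB → ℂ) :
    Matrix (Fin dA) (Fin dA) ℂ :=
  Matrix.of fun a a' => ∑ b, ∑ b', (starRingEnd ℂ) (x b) * y b' * ρ (a, b) (a', b')

theorem cinner_tensor2_mulVec_tensor2 (u v : Fin dA → ℂ) (x y : Fin dB → ℂ) :
    cinner (tensor2 u x) (ρ.mulVec (tensor2 v y)) = cinner u ((bContract ρ x y).mulVec v) := by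
  simp only [cinner, tensor2, bContract, Matrix.mulVec, dotProduct, Fintype.sum_prod_type,
    Matrix.of_apply, Finset.mul_sum, Finset.sum_mul, map_mul]
  refine Finset.sum_congr rfl fun a _ => ?_
  rw [Finset.sum_comm]
  refine Finset.sum_congr rfl fun a' _ => Finset.sum_congr rfl fun b _ =>
    Finset.sum_congr rfl fun b' _ => ?_
  ring

theorem cinner_condState_mulVec (u : Fin dA → ℂ) (x y : Fin dB → ℂ) :
    cinner x ((condState ρ u).mulVec y) = cinner (tensor2 u x) (ρ.mulVec (tensor2 u y)) := by
  simp only [cinner, tensor2, condState, Matrix.mulVec, dotProduct, Fintype.sum_prod_type,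
    Matrix.of_apply, Finset.mul_sum, Finset.sum_mul, map_mul]
  rw [Finset.sum_comm (s := (Finset.univ : Finset (Fin dA)))]
  refine Finset.sum_congr rfl fun b _ => ?_
  rw [← Finset.sum_comm_cycle]
  refine Finset.sum_congr rfl fun b' _ => Finset.sum_congr rfl fun a _ =>
    Finset.sum_congr rfl fun a' _ => ?_
  ring

theorem tensor2_sub (u : Fin dA → ℂ) (x y : Fin dB → ℂ) :
    tensor2 u (x - y) = tensor2 u x - tensor2 u y := by
  ext q
  simp only [tensor2, Pi.sub_apply, mul_sub]

theorem mulVec_tensor2_congr_of_condState_eq_smul_proj (hρ : ρ.PosSemidef) {u : Fin dA → ℂ} {c : ℂ}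
    {β : Fin dB → ℂ} (hu : condState ρ u = c • proj β) {x y : Fin dB → ℂ}
    (hxy : cinner β x = cinner β y) : ρ.mulVec (tensor2 u x) = ρ.mulVec (tensor2 u y) := by
  have horth : cinner β (x - y) = 0 := by
    rw [cinner_eq_dotProduct, dotProduct_sub, ← cinner_eq_dotProduct, ← cinner_eq_dotProduct, hxy,
      sub_self]
  have hker : ρ.mulVec (tensor2 u (x - y)) = 0 := by
    rw [← hρ.dotProduct_mulVec_zero_iff, ← cinner_eq_dotProduct, ← cinner_condState_mulVec, hu,
      smul_proj_mulVec_eq_zero_s15 c horth, cinner_eq_dotProduct, dotProduct_zero]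
  rwa [tensor2_sub, Matrix.mulVec_sub, sub_eq_zero] at hker

theorem Unsteerable.bContract_eq_zero (hρ : Unsteerable ρ) {α : Fin dA → Fin dA → ℂ}
    (hα : OrthonormalFam α) {p : Fin dA → ℂ} {β : Fin dA → Fin dB → ℂ}
    (hβ : ∀ a, condState ρ (α a) = p a • proj (β a)) {x y : Fin dB → ℂ}
    (hxy : ∀ a, cinner (β a) x = 0 ∨ cinner (β a) y = 0) : bContract ρ x y = 0 := by
  obtain ⟨n, P, σ, hP, -, hσ, hmodel⟩ := hρ
  obtain ⟨Q, hQ, hQsum, hQα⟩ := hmodel α hα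
  have hhidden : ∀ ξ, P ξ ≠ 0 → cinner x ((σ ξ).mulVec y) = 0 := fun ξ =>
    cinner_hiddenState_mulVec_eq_zero (fun η => (hσ η).1) hP (fun a η => (hQ a η).1) hQsum
      (fun a => (hβ a).symm.trans (hQα a)) hxy
  refine eq_zero_of_forall_isUnitVec_cinner_mulVec_self fun u hu => ?_
  obtain ⟨α', i, hα', rfl⟩ := hu.exists_orthonormalFam
  obtain ⟨Q', -, -, hQ'⟩ := hmodel α' hα'
  rw [← cinner_tensor2_mulVec_tensor2, ← cinner_condState_mulVec, hQ' i, cinner_eq_dotProduct,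
    Matrix.sum_mulVec, dotProduct_sum]
  refine Finset.sum_eq_zero fun ξ _ => ?_
  rw [Matrix.smul_mulVec, dotProduct_smul, ← cinner_eq_dotProduct]
  by_cases hξ : P ξ = 0
  · rw [hξ, mul_zero, Complex.ofReal_zero, zero_smul]
  · rw [hhidden ξ hξ, smul_zero]

end Bipartite

/-- corollary, part (i): under the hypotheses of Theorem 2 of the paper,
if some off-diagonal matrix element `⟨α_i⊗β_i, ρ (α_j⊗β_j)⟩` with `i ≠ j` is nonzero,
then `ρ` is steerable. -/
theorem stmt15 {dA dB : ℕ} (ρ : Matrix (Fin dA × Fin dB) (Fin dA × Fin dB) ℂ)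
    (hρ : IsState ρ)
    (α : Fin dA → Fin dA → ℂ) (hα : OrthonormalFam α)
    (β : Fin dA → Fin dB → ℂ) (hβ : ∀ a, IsUnitVec (β a))
    (hind : LinearIndependent ℂ β)
    (p : Fin dA → ℝ) (hp : ∀ a, 0 < p a)
    (h : ∀ a, condState ρ (α a) = (p a : ℂ) • proj (β a))
    (hcross : ∃ i j, i ≠ j ∧
      cinner (tensor2 (α i) (β i)) (ρ.mulVec (tensor2 (α j) (β j))) ≠ 0) :
    ¬ Unsteerable ρ := by
  intro hunsteerable
  obtain ⟨i, j, hij, hne⟩ := hcross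
  obtain ⟨w, hw⟩ := exists_cinner_eq_ite_of_linearIndependent hind
  have hβw : ∀ k l, cinner (β l) (w k) = if k = l then 1 else 0 := fun k l => by
    rw [← star_cinner, hw, apply_ite star, star_one, star_zero]
  have hdisjoint : ∀ a, cinner (β a) (w i) = 0 ∨ cinner (β a) (w j) = 0 := fun a => by
    rcases eq_or_ne i a with rfl | hia
    · exact .inr (by rw [hβw, if_neg hij.symm])
    · exact .inl (by rw [hβw, if_neg hia])
  have hρw : ∀ k, ρ.mulVec (tensor2 (α k) (β k)) = ρ.mulVec (tensor2 (α k) (w k)) := fun k =>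
    mulVec_tensor2_congr_of_condState_eq_smul_proj hρ.1 (h k)
      ((hβ k).trans (by rw [hβw, if_pos rfl]))
  apply hne
  rw [cinner_mulVec_congr_of_isHermitian hρ.1.isHermitian (hρw i) (hρw j),
    cinner_tensor2_mulVec_tensor2, hunsteerable.bContract_eq_zero hα h hdisjoint,
    Matrix.zero_mulVec, cinner_eq_dotProduct, dotProduct_zero]

end

end EPR
end
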